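/- arXiv:2205.13427 — 3 statements merged into one kernel-verified Lean document; each statement's English description precedes it below -/
import Mathlib

section
/- Let p be a prime and let i be a positive integer not divisible by p. Then the element N_i = 1 + γ + ⋯ + γ^{i−1} is a unit in the group algebra ℤ_{(p)}[ℤ/p] of the cyclic group of order p over the localization of ℤ at the prime p. -/
/-!
Modulo `N = 1 + g + ⋯ + g ^ (i - 1)` we have `g ^ i = 1`, because `N * (g - 1) = g ^ i - 1`. If
also `g ^ n = 1` with `n` prime to `i`, then `g = 1` modulo `N`, so that `0 = N = i` modulo `N`.
Hence `N` divides `i`, and it is a unit as soon as `i` is.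
-/

section GeomSum

variable {A : Type*} [CommRing A] {g : A} {i n : ℕ}

theorem geom_sum_dvd_sub_one_of_coprime (hg : g ^ n = 1) (hin : i.Coprime n) :
    ∑ m ∈ Finset.range i, g ^ m ∣ g - 1 := by
  let π := Ideal.Quotient.mk (Ideal.span {∑ m ∈ Finset.range i, g ^ m})
  have pow_i : π g ^ i = 1 := by
    rw [← map_pow, ← map_one π, Ideal.Quotient.mk_eq_mk_iff_sub_mem, Ideal.mem_span_singleton,
      ← geom_sum_mul]
    exact dvd_mul_right _ _
  have pow_n : π g ^ n = 1 := by rw [← map_pow, hg, map_one]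
  have eq_one : π g = π 1 :=
    ((pow_eq_one_iff_of_coprime hin).mp ⟨pow_i, pow_n⟩).trans (map_one π).symm
  rwa [Ideal.Quotient.mk_eq_mk_iff_sub_mem, Ideal.mem_span_singleton] at eq_one

theorem sub_one_dvd_geom_sum_sub_natCast (g : A) (i : ℕ) :
    g - 1 ∣ ∑ m ∈ Finset.range i, g ^ m - (i : A) := by
  have sum_sub : ∑ m ∈ Finset.range i, g ^ m - (i : A) = ∑ m ∈ Finset.range i, (g ^ m - 1) := by
    simp
  exact sum_sub ▸ Finset.dvd_sum fun m _ => sub_one_dvd_pow_sub_one g m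

theorem geom_sum_dvd_natCast_of_coprime (hg : g ^ n = 1) (hin : i.Coprime n) :
    ∑ m ∈ Finset.range i, g ^ m ∣ (i : A) :=
  dvd_sub_self_left.mp <|
    (geom_sum_dvd_sub_one_of_coprime hg hin).trans (sub_one_dvd_geom_sum_sub_natCast g i)

theorem statement1_general (hg : g ^ n = 1) (hin : i.Coprime n) (hi : IsUnit (i : A)) :
    IsUnit (∑ m ∈ Finset.range i, g ^ m) :=
  isUnit_of_dvd_unit (geom_sum_dvd_natCast_of_coprime hg hin) hi

end GeomSum

theorem isUnit_natCast_of_not_dvd {R : Type*} [CommSemiring R] {p : R}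
    [(Ideal.span {p}).IsPrime] {i : ℕ} (hpi : ¬ p ∣ (i : R)) (S : Type*) [CommSemiring S]
    [Algebra R S] [IsLocalization.AtPrime S (Ideal.span {p})] : IsUnit (i : S) := by
  rwa [← map_natCast (algebraMap R S), IsLocalization.AtPrime.isUnit_to_map_iff S (Ideal.span {p}),
    Ideal.mem_primeCompl_iff, Ideal.mem_span_singleton]

theorem of_ofAdd_zmod_pow_eq_one (R : Type*) [Semiring R] {n : ℕ} (a : ZMod n) :
    MonoidAlgebra.of R (Multiplicative (ZMod n)) (Multiplicative.ofAdd a) ^ n = 1 := by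
  rw [← map_pow, ← ofAdd_nsmul, ZModModule.char_nsmul_eq_zero, ofAdd_zero, map_one]

/-- For a prime `p` and a positive integer `i` not divisible by `p`,
the norm-like element `N_i = 1 + γ + ⋯ + γ^{i−1}` is a unit in the group algebra
`ℤ_{(p)}[ℤ/p]`, where `ℤ_{(p)}` is the localization of `ℤ` at the prime `(p)`. -/
theorem statement1 (p : ℕ) (hp : p.Prime) (i : ℕ) (hi : 0 < i) (hpi : ¬ (p : ℤ) ∣ i)
    [hP : (Ideal.span {(p : ℤ)}).IsPrime]
    (γ : MonoidAlgebra (Localization.AtPrime (Ideal.span {(p : ℤ)})) (Multiplicative (ZMod p)))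
    (hγ : γ = MonoidAlgebra.of (Localization.AtPrime (Ideal.span {(p : ℤ)}))
      (Multiplicative (ZMod p)) (Multiplicative.ofAdd (1 : ZMod p))) :
    IsUnit (∑ m ∈ Finset.range i, γ ^ m) := by
  have coprime : i.Coprime p := (hp.coprime_iff_not_dvd.mpr (mod_cast hpi)).symm
  have isUnit_i : IsUnit (i : Localization.AtPrime (Ideal.span {(p : ℤ)})) :=
    isUnit_natCast_of_not_dvd hpi _
  exact statement1_general (hγ ▸ of_ofAdd_zmod_pow_eq_one _ 1) coprime
    (by simpa only [map_natCast] using isUnit_i.map (algebraMap _ (MonoidAlgebra _ _)))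
end

section
/- Let p be a prime, R = 𝔽_p[ℤ/p] the group algebra of the cyclic group of order p over the field with p elements, and for 1 ≤ i ≤ p let L_i = R/((γ−1)^i). Then for every j with 1 ≤ j ≤ p there is a short exact sequence of R-modules 0 → L_{p+1−j} → L_1 ⊕ L_p → L_j → 0. -/
/-- The group algebra `𝔽_p[ℤ/p]`. -/
abbrev GrpAlg (p : ℕ) : Type := MonoidAlgebra (ZMod p) (Multiplicative (ZMod p))

/-- The generator `γ` of `ℤ/p`, viewed in the group algebra. -/
noncomputable def gammaEl (p : ℕ) : GrpAlg p :=
  MonoidAlgebra.of (ZMod p) (Multiplicative (ZMod p)) (Multiplicative.ofAdd (1 : ZMod p))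

/-- The module `L_i = R/((γ−1)^i)`, on which `γ` acts by a Jordan block of size `i`. -/
abbrev Ljordan (p i : ℕ) : Type := GrpAlg p ⧸ Ideal.span {(gammaEl p - 1) ^ i}

/-!
For a linear map `φ : M → N` and submodules `P ≤ M`, `Q ≤ N`, there is a Mayer–Vietoris sequence
`0 → M/(P ⊓ φ⁻¹Q) → M/P × N/Q → N/(φP + Q) → 0`. For `i ≤ j ≤ n`, take `M = N = R`, `φ` the
multiplication by `T ^ (j - i)`, `P = (T ^ i)` and `Q = (T ^ n)`. Then `φP + Q = (T ^ j)`, and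
`P ⊓ φ⁻¹Q` is `(T ^ (n + i - j))` as soon as that ideal contains the annihilator of `T ^ (j - i)`.
For a cyclic group of order `n = p ^ m` generated by `γ`, in characteristic `p`, and `T = γ - 1`,
this is read off from `k[G] ≅ k[X]/(X ^ n - 1) = k[X]/((X - 1) ^ n)`, since `X - 1` is not a zero
divisor in `k[X]`. The case `m = i = 1` is the sequence with middle term `L_1 ⊕ L_p`.
-/

section MayerVietoris

variable {R M N : Type*} [Ring R] [AddCommGroup M] [Module R M] [AddCommGroup N] [Module R N]
  (φ : M →ₗ[R] N) (P : Submodule R M) (Q : Submodule R N)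

/-- The first map `x ↦ (x, -φ x)` of the Mayer–Vietoris sequence of `φ`, `P` and `Q`. -/
def mayerVietorisLeft : (M ⧸ P ⊓ Q.comap φ) →ₗ[R] (M ⧸ P) × (N ⧸ Q) :=
  (Submodule.factor inf_le_left).prod (-Submodule.mapQ _ Q φ inf_le_right)

/-- The second map `(x, y) ↦ φ x + y` of the Mayer–Vietoris sequence of `φ`, `P` and `Q`. -/
def mayerVietorisRight : (M ⧸ P) × (N ⧸ Q) →ₗ[R] N ⧸ P.map φ ⊔ Q :=
  (Submodule.mapQ P _ φ (Submodule.map_le_iff_le_comap.1 le_sup_left)).coprod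
    (Submodule.factor le_sup_right)

theorem mayerVietorisLeft_mkQ (x : M) :
    mayerVietorisLeft φ P Q (Submodule.mkQ _ x) = (P.mkQ x, Q.mkQ (-φ x)) := rfl

theorem mayerVietorisRight_mkQ (x : M) (y : N) :
    mayerVietorisRight φ P Q (P.mkQ x, Q.mkQ y) = Submodule.mkQ _ (φ x + y) := rfl

theorem mayerVietorisLeft_injective : Function.Injective (mayerVietorisLeft φ P Q) := by
  rw [injective_iff_map_eq_zero]
  intro z hz
  obtain ⟨x, rfl⟩ := Submodule.mkQ_surjective _ z
  rw [mayerVietorisLeft_mkQ, Prod.mk_eq_zero] at hz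
  simpa using hz

theorem mayerVietorisRight_surjective : Function.Surjective (mayerVietorisRight φ P Q) := by
  intro z
  obtain ⟨y, rfl⟩ := Submodule.mkQ_surjective _ z
  exact ⟨(P.mkQ 0, Q.mkQ y), by rw [mayerVietorisRight_mkQ, map_zero, zero_add]⟩

theorem mayerVietoris_exact :
    Function.Exact (mayerVietorisLeft φ P Q) (mayerVietorisRight φ P Q) := by
  refine LinearMap.exact_of_comp_of_mem_range ?_ ?_
  · ext x
    change mayerVietorisRight φ P Q (mayerVietorisLeft φ P Q (Submodule.mkQ _ x)) = 0
    rw [mayerVietorisLeft_mkQ, mayerVietorisRight_mkQ, add_neg_cancel, map_zero]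
  · rintro ⟨u, v⟩ huv
    obtain ⟨x, rfl⟩ := P.mkQ_surjective u
    obtain ⟨y, rfl⟩ := Q.mkQ_surjective v
    rw [mayerVietorisRight_mkQ, Submodule.mkQ_apply, Submodule.Quotient.mk_eq_zero,
      Submodule.mem_sup] at huv
    obtain ⟨_, ⟨a, ha, rfl⟩, q, hq, hxy⟩ := huv
    refine ⟨Submodule.mkQ _ (x - a), ?_⟩
    rw [mayerVietorisLeft_mkQ, Prod.mk.injEq]
    constructor
    · simpa using ha
    · have hdiff : -φ (x - a) - y = -q := by
        rw [map_sub, ← sub_eq_zero, ← sub_eq_zero.2 hxy]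
        abel
      exact (Submodule.Quotient.eq Q).2 (hdiff ▸ Q.neg_mem hq)

end MayerVietoris

section SpanPow

variable {R : Type*} [CommRing R] {t : R} {i j n : ℕ}

theorem map_mulLeft_span_pow_sup_span_pow (hij : i ≤ j) (hjn : j ≤ n) :
    Submodule.map (LinearMap.mulLeft R (t ^ (j - i))) (Ideal.span {t ^ i}) ⊔ Ideal.span {t ^ n} =
      Ideal.span {t ^ j} := by
  have hmap : Submodule.map (LinearMap.mulLeft R (t ^ (j - i))) (Ideal.span {t ^ i}) =
      Ideal.span {t ^ j} := by
    simp [Ideal.span, Submodule.map_span, ← pow_add, Nat.sub_add_cancel hij]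
  rw [hmap, sup_eq_left, Ideal.span_singleton_le_span_singleton]
  exact pow_dvd_pow t hjn

theorem span_pow_inf_comap_mulLeft_span_pow (hij : i ≤ j) (hjn : j ≤ n)
    (ht : ∀ x, t ^ (j - i) * x = 0 → t ^ (n - (j - i)) ∣ x) :
    Ideal.span {t ^ i} ⊓ Submodule.comap (LinearMap.mulLeft R (t ^ (j - i))) (Ideal.span {t ^ n}) =
      Ideal.span {t ^ (n + i - j)} := by
  have hexp : n + i - j = n - (j - i) := by omega
  have hpow : t ^ n = t ^ (j - i) * t ^ (n - (j - i)) := by rw [← pow_add]; congr 1; omega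
  ext x
  simp only [Submodule.mem_inf, Submodule.mem_comap, LinearMap.mulLeft_apply,
    Ideal.mem_span_singleton, hexp]
  constructor
  · rintro ⟨-, y, hy⟩
    have hann : t ^ (j - i) * (x - t ^ (n - (j - i)) * y) = 0 := by
      rw [mul_sub, hy, hpow, mul_assoc, sub_self]
    exact (dvd_sub_left (dvd_mul_right _ y)).1 (ht _ hann)
  · intro hx
    exact ⟨(pow_dvd_pow t (by omega)).trans hx, hpow ▸ mul_dvd_mul_left _ hx⟩

theorem exists_shortExact_quotient_span_pow (hij : i ≤ j) (hjn : j ≤ n)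
    (ht : ∀ x, t ^ (j - i) * x = 0 → t ^ (n - (j - i)) ∣ x) :
    ∃ (f : (R ⧸ Ideal.span {t ^ (n + i - j)}) →ₗ[R]
          (R ⧸ Ideal.span {t ^ i}) × (R ⧸ Ideal.span {t ^ n}))
      (g : (R ⧸ Ideal.span {t ^ i}) × (R ⧸ Ideal.span {t ^ n}) →ₗ[R] R ⧸ Ideal.span {t ^ j}),
      Function.Injective f ∧ Function.Surjective g ∧ LinearMap.range f = LinearMap.ker g := by
  rw [← span_pow_inf_comap_mulLeft_span_pow hij hjn ht,
    ← map_mulLeft_span_pow_sup_span_pow hij hjn]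
  exact ⟨mayerVietorisLeft _ _ _, mayerVietorisRight _ _ _, mayerVietorisLeft_injective _ _ _,
    mayerVietorisRight_surjective _ _ _, (mayerVietoris_exact _ _ _).linearMap_ker_eq.symm⟩

end SpanPow

theorem map_pow_dvd_of_map_pow_mul_eq_zero {A B F : Type*} [CommRing A] [CommRing B]
    [FunLike F A B] [RingHomClass F A B] {φ : F} (hφ : Function.Surjective φ) {t : A}
    (ht : IsLeftRegular t) {k n : ℕ} (hkn : k ≤ n) (hker : ∀ a, φ a = 0 → t ^ n ∣ a) {x : B}
    (hx : φ t ^ k * x = 0) : φ t ^ (n - k) ∣ x := by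
  obtain ⟨a, rfl⟩ := hφ x
  obtain ⟨b, hb⟩ : t ^ n ∣ t ^ k * a := hker _ (by rw [map_mul, map_pow, hx])
  have ha : a = t ^ (n - k) * b := by
    apply ht.pow k
    simp only [hb, ← mul_assoc, ← pow_add, Nat.add_sub_cancel' hkn]
  exact ⟨φ b, by rw [ha, map_mul, map_pow]⟩

section CyclicGroupAlgebra

open Polynomial

theorem aeval_of_surjective {k G : Type*} [CommSemiring k] [Monoid G] {g : G}
    (hg : ∀ x, x ∈ Submonoid.powers g) :
    Function.Surjective (aeval (R := k) (MonoidAlgebra.of k G g)) := by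
  intro c
  induction c using MonoidAlgebra.induction_on with
  | of x =>
    obtain ⟨n, rfl⟩ := hg x
    exact ⟨X ^ n, by rw [map_pow, aeval_X, map_pow]⟩
  | add a b ha hb =>
    obtain ⟨P, rfl⟩ := ha
    obtain ⟨Q, rfl⟩ := hb
    exact ⟨P + Q, map_add _ _ _⟩
  | smul r a ha =>
    obtain ⟨P, rfl⟩ := ha
    exact ⟨r • P, map_smul _ _ _⟩

theorem coeff_aeval_of {k G : Type*} [CommSemiring k] [Monoid G] {g : G} {P : k[X]}
    (hP : P.natDegree < orderOf g) {i : ℕ} (hi : i < orderOf g) :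
    (aeval (MonoidAlgebra.of k G g) P).coeff (g ^ i) = P.coeff i := by
  classical
  have hpow : ∀ l ∈ Finset.range (orderOf g), g ^ l = g ^ i ↔ l = i := fun l hl ↦
    pow_injOn_Iio_orderOf.eq_iff (Finset.mem_range.1 hl) hi
  simp only [aeval_eq_sum_range' hP, MonoidAlgebra.of_apply, MonoidAlgebra.single_pow, one_pow,
    MonoidAlgebra.coeff_sum, MonoidAlgebra.coeff_smul, Finsupp.finsetSum_apply,
    Finsupp.smul_apply, MonoidAlgebra.coeff_single, Finsupp.single_apply, smul_eq_mul, mul_ite,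
    mul_one, mul_zero]
  rw [Finset.sum_congr rfl fun l hl ↦ if_congr (hpow l hl) rfl rfl, Finset.sum_ite_eq',
    if_pos (Finset.mem_range.2 hi)]

theorem X_pow_orderOf_sub_one_dvd_of_aeval_of_eq_zero {k G : Type*} [CommRing k] [Monoid G]
    {g : G} (hg : IsOfFinOrder g) {P : k[X]} (hP : aeval (MonoidAlgebra.of k G g) P = 0) :
    X ^ orderOf g - 1 ∣ P := by
  nontriviality k
  have hmonic : (X ^ orderOf g - 1 : k[X]).Monic :=
    monic_X_pow_sub_C 1 hg.orderOf_pos.ne'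
  have hroot : aeval (MonoidAlgebra.of k G g) (X ^ orderOf g - 1 : k[X]) = 0 := by
    rw [map_sub, map_pow, aeval_X, ← map_pow, pow_orderOf_eq_one, map_one, map_one, sub_self]
  have hdegree : (X ^ orderOf g - 1 : k[X]).natDegree = orderOf g :=
    natDegree_X_pow_sub_C (r := 1)
  have hne_one : (X ^ orderOf g - 1 : k[X]) ≠ 1 := fun hone ↦
    hg.orderOf_pos.ne (by rw [← hdegree, hone, natDegree_one])
  have hlt : (P %ₘ (X ^ orderOf g - 1)).natDegree < orderOf g :=
    (natDegree_modByMonic_lt P hmonic hne_one).trans_eq hdegree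
  rw [← modByMonic_eq_zero_iff_dvd hmonic]
  ext i
  rcases lt_or_ge i (orderOf g) with hi | hi
  · rw [← coeff_aeval_of hlt hi, aeval_modByMonic_eq_self_of_root hroot, hP]
    simp
  · rw [coeff_eq_zero_of_natDegree_lt (hlt.trans_le hi), coeff_zero]

variable {k G : Type*} [CommRing k] [CommGroup G] {p m n : ℕ} [ExpChar k p] {g : G}

theorem of_sub_one_pow_dvd_of_pow_mul_eq_zero (hg : ∀ x, x ∈ Subgroup.zpowers g)
    (hgn : orderOf g = n) (hn : n = p ^ m) {l : ℕ} (hln : l ≤ n) {x : MonoidAlgebra k G}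
    (hx : (MonoidAlgebra.of k G g - 1) ^ l * x = 0) :
    (MonoidAlgebra.of k G g - 1) ^ (n - l) ∣ x := by
  have hfin : IsOfFinOrder g :=
    orderOf_pos_iff.1 (by rw [hgn, hn]; exact pow_pos (expChar_pos k p) m)
  have hsurj : Function.Surjective (aeval (R := k) (MonoidAlgebra.of k G g)) :=
    aeval_of_surjective fun x ↦ hfin.mem_powers_iff_mem_zpowers.2 (hg x)
  have hfrob : (X - 1 : k[X]) ^ n = X ^ n - 1 := by rw [hn, sub_pow_expChar_pow, one_pow]
  have hT : aeval (R := k) (MonoidAlgebra.of k G g) (X - 1) = MonoidAlgebra.of k G g - 1 := by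
    rw [map_sub, aeval_X, map_one]
  have hregular : IsLeftRegular (X - 1 : k[X]) := (monic_X_sub_C 1).isRegular.left
  rw [← hT] at hx ⊢
  refine map_pow_dvd_of_map_pow_mul_eq_zero hsurj hregular hln (fun P hP ↦ ?_) hx
  rw [hfrob, ← hgn]
  exact X_pow_orderOf_sub_one_dvd_of_aeval_of_eq_zero hfin hP

/-- The cyclic `k[G]`-module `k[G]/((g - 1) ^ l)`. If `k` is a field of characteristic `p` and
`g` generates `G` and has order a power of `p`, then for `1 ≤ l ≤ orderOf g` the generator `g` acts
on it by a single unipotent Jordan block of size `l`. -/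
abbrev JordanQuotient (k : Type*) {G : Type*} [CommRing k] [CommGroup G] (g : G) (l : ℕ) : Type _ :=
  MonoidAlgebra k G ⧸ Ideal.span {(MonoidAlgebra.of k G g - 1) ^ l}

theorem statement4_general (hg : ∀ x, x ∈ Subgroup.zpowers g) (hgn : orderOf g = n)
    (hn : n = p ^ m) {i j : ℕ} (hij : i ≤ j) (hjn : j ≤ n) :
    ∃ (f : JordanQuotient k g (n + i - j) →ₗ[MonoidAlgebra k G]
          JordanQuotient k g i × JordanQuotient k g n)
      (h : JordanQuotient k g i × JordanQuotient k g n →ₗ[MonoidAlgebra k G]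
          JordanQuotient k g j),
      Function.Injective f ∧ Function.Surjective h ∧ LinearMap.range f = LinearMap.ker h :=
  exists_shortExact_quotient_span_pow hij hjn fun _ ↦
    of_sub_one_pow_dvd_of_pow_mul_eq_zero hg hgn hn (by omega)

end CyclicGroupAlgebra

theorem mem_zpowers_ofAdd_one (n : ℕ) (x : Multiplicative (ZMod n)) :
    x ∈ Subgroup.zpowers (Multiplicative.ofAdd (1 : ZMod n)) := by
  obtain ⟨z, hz⟩ := ZMod.intCast_surjective x.toAdd
  exact ⟨z, by simp [← ofAdd_zsmul, hz]⟩

/-- For a prime `p` and `1 ≤ j ≤ p`, there is a short exact sequence of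
`𝔽_p[ℤ/p]`-modules `0 → L_{p+1−j} → L_1 ⊕ L_p → L_j → 0`. -/
theorem statement4 (p : ℕ) (hp : p.Prime) (j : ℕ) (hj1 : 1 ≤ j) (hjp : j ≤ p) :
    ∃ (f : Ljordan p (p + 1 - j) →ₗ[GrpAlg p] Ljordan p 1 × Ljordan p p)
      (g : Ljordan p 1 × Ljordan p p →ₗ[GrpAlg p] Ljordan p j),
      Function.Injective f ∧ Function.Surjective g ∧ LinearMap.range f = LinearMap.ker g := by
  have : Fact p.Prime := ⟨hp⟩
  exact statement4_general (mem_zpowers_ofAdd_one p)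
    ((orderOf_ofAdd_eq_addOrderOf 1).trans (ZMod.addOrderOf_one p)) (pow_one p).symm hj1 hjp
end

section
/- Let p be an odd prime, B = 𝔽_p[t,u]/(u²) the commutative 𝔽_p-algebra on a polynomial generator t and a generator u with u² = 0, and J = (t,u) ⊆ B the ideal generated by t and u. Then for every i ≥ 1 the B-module Tor_i^B(J, J) is annihilated by J and is a 2-dimensional vector space over 𝔽_p. -/
open CategoryTheory

/-- The commutative `𝔽_p`-algebra `B = 𝔽_p[t,u]/(u²)`. -/
abbrev Balg (p : ℕ) : Type :=
  MvPolynomial (Fin 2) (ZMod p) ⧸ Ideal.span {(MvPolynomial.X 1 : MvPolynomial (Fin 2) (ZMod p)) ^ 2}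

/-- The polynomial generator `t` of `B`. -/
noncomputable def tB (p : ℕ) : Balg p :=
  Ideal.Quotient.mk _ (MvPolynomial.X 0)

/-- The exterior generator `u` of `B`, satisfying `u² = 0`. -/
noncomputable def uB (p : ℕ) : Balg p :=
  Ideal.Quotient.mk _ (MvPolynomial.X 1)

/-- The ideal `J = (t,u) ⊆ B`. -/
noncomputable def Jid (p : ℕ) : Ideal (Balg p) := Ideal.span {tB p, uB p}

/-!
The matrix `d (x, y) = (u x + t y, -u y)` is an exact endomorphism of the free module `B²` with
cokernel `J`: its columns generate the syzygies of the generators `u, t` of `J`, and they satisfy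
the same relations as the generators. So `J` has a free resolution that is periodic of period one.
The entries of `d` lie in `J`, hence `J ⊗ d` is the restriction of `d` to `J B²` and `d` vanishes on
`B² / J B²`; the connecting map of `0 → J B² → B² → B² / J B² → 0` then identifies the homology of
`J ⊗ d`, that is `Tor_i (J, J)`, with `B² / J B² = (B / J)²`.
-/

section PeriodicResolution

universe v v' w w'

variable {C : Type w} [Category.{v} C] [Abelian C] {P Z : C} (d : P ⟶ P) (hd : d ≫ d = 0)

/-- The one-periodic complex `⋯ ⟶ P ⟶ P ⟶ P` all of whose differentials are the same
square-zero endomorphism `d`. -/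
noncomputable abbrev periodicComplex : ChainComplex C ℕ :=
  HomologicalComplex.alternatingConst P hd hd fun _ _ ↦ ComplexShape.down_nat_odd_add

/-- Three consecutive terms of the one-periodic complex. -/
noncomputable def periodicComplexScIso (n : ℕ) :
    (periodicComplex d hd).sc' (n + 2) (n + 1) n ≅ ShortComplex.mk d d hd :=
  if h : Even (n + 1) then
    HomologicalComplex.alternatingConstScIsoEven P hd hd _ rfl rfl h
  else
    HomologicalComplex.alternatingConstScIsoOdd P hd hd _ rfl rfl (Nat.not_even_iff_odd.1 h)

variable {d hd} {ε : P ⟶ Z} {hε : d ≫ ε = 0}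

/-- The one-periodic projective resolution of the cokernel of an exact endomorphism `d` of a
projective object. -/
noncomputable def periodicResolution [Projective P] [Epi ε]
    (hdd : (ShortComplex.mk d d hd).Exact) (hdε : (ShortComplex.mk d ε hε).Exact) :
    ProjectiveResolution Z where
  complex := periodicComplex d hd
  projective _ := inferInstanceAs (Projective P)
  π := ((periodicComplex d hd).toSingle₀Equiv Z).symm ⟨ε, by simpa using! hε⟩
  quasiIso := ⟨fun n ↦ by
    cases n with
    | zero =>
      rw [ChainComplex.quasiIsoAt₀_iff, ShortComplex.quasiIso_iff_of_zeros' _ rfl rfl rfl]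
      constructor
      · convert! hdε
        exact ChainComplex.toSingle₀Equiv_symm_apply_f_zero _ _
      · convert! ‹Epi ε›
        exact ChainComplex.toSingle₀Equiv_symm_apply_f_zero _ _
    | succ n =>
      rw [quasiIsoAt_iff_exactAt' (hL := ChainComplex.exactAt_succ_single_obj ..),
        HomologicalComplex.exactAt_iff' _ (n + 2) (n + 1) n (by simp) (by simp)]
      exact (ShortComplex.exact_iff_of_iso (periodicComplexScIso d hd n)).2 hdd⟩

/-- The higher left derived functors of the cokernel of an exact endomorphism `d` of a projective
object, computed as the homology of `F.map d`. -/
noncomputable def leftDerivedObjIsoOfPeriodic [Projective P] [Epi ε] [HasProjectiveResolutions C]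
    {D : Type w'} [Category.{v'} D] [Abelian D] (F : C ⥤ D) [F.Additive]
    (hdd : (ShortComplex.mk d d hd).Exact) (hdε : (ShortComplex.mk d ε hε).Exact) (n : ℕ) :
    (F.leftDerived (n + 1)).obj Z ≅ ((ShortComplex.mk d d hd).map F).homology :=
  (periodicResolution hdd hdε).isoLeftDerivedObj F (n + 1) ≪≫
    HomologicalComplex.homologyIsoSc' _ (n + 2) (n + 1) n (by simp) (by simp) ≪≫
    ShortComplex.homologyMapIso (F.mapShortComplex.mapIso (periodicComplexScIso d hd n))

end PeriodicResolution

section ConnectingMap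

variable {R T M : Type*} [Ring R] [AddCommGroup T] [Module R T] [AddCommGroup M] [Module R M]
  {e : T →ₗ[R] T} {d : M →ₗ[R] M} {ι : T →ₗ[R] M}
  (hd : Function.Exact d d) (hι : Function.Injective ι) (hcomm : ι ∘ₗ e = d ∘ₗ ι)
  (hdι : LinearMap.range d ≤ LinearMap.range ι)

/-- The connecting map from the quotient `M ⧸ range ι`, on which `d` vanishes, to the cycles of `e`,
precomposed with `M → M ⧸ range ι`: it sends `x` to the unique `y` with `ι y = d x`. -/
noncomputable def connectingToKer : M →ₗ[R] LinearMap.ker e :=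
  LinearMap.codRestrict _
    ((LinearEquiv.ofInjective ι hι).symm ∘ₗ Submodule.inclusion hdι ∘ₗ d.rangeRestrict) fun x ↦ by
      apply hι
      have := LinearMap.congr_fun hcomm
        ((LinearEquiv.ofInjective ι hι).symm (Submodule.inclusion hdι (d.rangeRestrict x)))
      simpa [hd.apply_apply_eq_zero] using this

@[simp]
lemma map_connectingToKer (x : M) : ι (connectingToKer hd hι hcomm hdι x) = d x := by
  exact congrArg Subtype.val ((LinearEquiv.ofInjective ι hι).apply_symm_apply
    (Submodule.inclusion hdι (d.rangeRestrict x)))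

lemma connectingToKer_surjective : Function.Surjective (connectingToKer hd hι hcomm hdι) := by
  rintro ⟨y, hy⟩
  have hdy : d (ι y) = 0 := by
    rw [← LinearMap.comp_apply, ← hcomm, LinearMap.comp_apply, hy, map_zero]
  obtain ⟨x, hx⟩ := (hd _).1 hdy
  exact ⟨x, Subtype.ext (hι (by simpa using hx))⟩

lemma connectingToKer_mem_range_iff (he : ∀ y, e y ∈ LinearMap.ker e) (x : M) :
    connectingToKer hd hι hcomm hdι x ∈ LinearMap.range (e.codRestrict _ he) ↔
      x ∈ LinearMap.range ι := by
  have hιe (y : T) : ι (e y) = d (ι y) := LinearMap.congr_fun hcomm y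
  constructor
  · rintro ⟨y, hy⟩
    have hxy : d (x - ι y) = 0 := by
      rw [map_sub, ← map_connectingToKer hd hι hcomm hdι, ← hy, LinearMap.codRestrict_apply, hιe,
        sub_self]
    have hmem : x - ι y ∈ LinearMap.range ι := hdι ((hd _).1 hxy)
    simpa using add_mem hmem (LinearMap.mem_range_self ι y)
  · rintro ⟨y, rfl⟩
    exact ⟨y, Subtype.ext (hι (by simp [hιe]))⟩

/-- If `d` is exact on `M` and vanishes on `M ⧸ range ι`, then the homology of the restriction `e`
of `d` along `ι` is `M ⧸ range ι`. -/
noncomputable def quotientRangeEquivHomology (he : ∀ y, e y ∈ LinearMap.ker e) :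
    (M ⧸ LinearMap.range ι) ≃ₗ[R] LinearMap.ker e ⧸ LinearMap.range (e.codRestrict _ he) :=
  Submodule.quotEquivOfEq _ _ (by
    ext x
    simp [← connectingToKer_mem_range_iff hd hι hcomm hdι he]) ≪≫ₗ
  ((LinearMap.range (e.codRestrict _ he)).mkQ ∘ₗ
    connectingToKer hd hι hcomm hdι).quotKerEquivOfSurjective
    ((Submodule.mkQ_surjective _).comp (connectingToKer_surjective hd hι hcomm hdι))

end ConnectingMap

section Tor

open TensorProduct

universe v

variable {R : Type v} [CommRing R] {P Z : Type v} [AddCommGroup P] [Module R P]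
  [Module.Projective R P] [AddCommGroup Z] [Module R Z] {d : P →ₗ[R] P} {ε : P →ₗ[R] Z}

/-- If `d` is an exact endomorphism of the projective module `P` that vanishes modulo `I`, then the
higher `Tor(I, coker d)` are all isomorphic to `P ⧸ I P`. -/
noncomputable def torEquivOfPeriodic (I : Ideal R) (hd : Function.Exact d d)
    (hdε : Function.Exact d ε) (hε : Function.Surjective ε)
    (hdI : LinearMap.range d ≤ I • (⊤ : Submodule R P)) (n : ℕ) :
    ((Tor (ModuleCat R) (n + 1)).obj (ModuleCat.of R I)).obj (ModuleCat.of R Z) ≃ₗ[R]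
      P ⧸ I • (⊤ : Submodule R P) :=
  let ι : I ⊗[R] P →ₗ[R] P := TensorProduct.lid R P ∘ₗ I.subtype.rTensor P
  have hι : Function.Injective ι := (TensorProduct.lid R P).injective.comp
    (Module.Flat.rTensor_preserves_injective_linearMap _ I.injective_subtype)
  have hrange : LinearMap.range ι = I • ⊤ := Ideal.subtype_rTensor_range P I
  have hcomm : ι ∘ₗ d.lTensor I = d ∘ₗ ι := by ext; simp [ι]
  let S := ModuleCat.shortComplexOfCompEqZero d d hd.linearMap_comp_eq_zero
  have : Epi (ModuleCat.ofHom ε) := (ModuleCat.epi_iff_surjective _).2 hε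
  have : Projective (ModuleCat.of R P) := (IsProjective.iff_projective P).1 inferInstance
  have hSε := ModuleCat.shortComplex_exact
    (ModuleCat.shortComplexOfCompEqZero d ε hdε.linearMap_comp_eq_zero) hdε
  let F := (MonoidalCategory.tensoringLeft (ModuleCat R)).obj (ModuleCat.of R I)
  (leftDerivedObjIsoOfPeriodic F (ModuleCat.shortComplex_exact S hd) hSε n ≪≫
      (S.map F).moduleCatHomologyIso).toLinearEquiv ≪≫ₗ
    (quotientRangeEquivHomology hd hι hcomm (hdI.trans_eq hrange.symm) _).symm ≪≫ₗ
    Submodule.quotEquivOfEq _ _ hrange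

end Tor

section SpanPair

variable {R : Type*} [CommRing R] (t u : R)

/-- The presentation `(x, y) ↦ u x + t y` of the ideal `(t, u)`. -/
noncomputable def spanPairMap : R × R →ₗ[R] Ideal.span {t, u} :=
  ((LinearMap.mulLeft R u).coprod (LinearMap.mulLeft R t)).codRestrict (Ideal.span {t, u})
    fun x ↦ Ideal.mem_span_pair.2 ⟨x.2, x.1, by
      simp only [LinearMap.coprod_apply, LinearMap.mulLeft_apply]; ring⟩

/-- The endomorphism `(x, y) ↦ (u x + t y, -u y)` of `R²`, which is square-zero if `u² = 0`; its
columns are the relation `u · u = 0` and the Koszul relation between the generators `u` and `t`. -/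
def spanPairSyzygy : R × R →ₗ[R] R × R :=
  ((LinearMap.mulLeft R u).coprod (LinearMap.mulLeft R t)).prod
    (-(LinearMap.mulLeft R u ∘ₗ LinearMap.snd R R R))

@[simp]
lemma coe_spanPairMap_apply (x : R × R) : (spanPairMap t u x : R) = u * x.1 + t * x.2 := rfl

@[simp]
lemma spanPairSyzygy_apply (x : R × R) :
    spanPairSyzygy t u x = (u * x.1 + t * x.2, -(u * x.2)) := rfl

lemma spanPairMap_surjective : Function.Surjective (spanPairMap t u) := by
  rintro ⟨z, hz⟩
  obtain ⟨a, b, rfl⟩ := Ideal.mem_span_pair.1 hz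
  exact ⟨(b, a), Subtype.ext (by rw [coe_spanPairMap_apply]; ring)⟩

lemma range_spanPairSyzygy_le :
    LinearMap.range (spanPairSyzygy t u) ≤ Ideal.span {t, u} • (⊤ : Submodule R (R × R)) := by
  have ht : t ∈ Ideal.span {t, u} := Ideal.subset_span (by simp)
  have hu : u ∈ Ideal.span {t, u} := Ideal.subset_span (by simp)
  rintro _ ⟨⟨x, y⟩, rfl⟩
  have hxy : spanPairSyzygy t u (x, y) = u • (x, -y) + t • (y, 0) := by simp
  rw [hxy]
  exact add_mem (Submodule.smul_mem_smul hu trivial) (Submodule.smul_mem_smul ht trivial)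

variable {t u}

lemma mul_add_mul_eq_zero_iff_mem_range_spanPairSyzygy (hu : ∀ y, u * y = 0 ↔ u ∣ y)
    (ht : ∀ y, u ∣ t * y → u ∣ y) (x : R × R) :
    u * x.1 + t * x.2 = 0 ↔ x ∈ Set.range (spanPairSyzygy t u) := by
  constructor
  · intro hx
    obtain ⟨z, hz⟩ : u ∣ x.2 := ht _ ⟨-x.1, by linear_combination hx⟩
    obtain ⟨w, hw⟩ : u ∣ x.1 + t * z := (hu _).1 (by linear_combination hx - t * hz)
    exact ⟨(w, -z), Prod.ext (by rw [spanPairSyzygy_apply]; linear_combination -hw) (by simp [hz])⟩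
  · rintro ⟨y, rfl⟩
    have huu : u * u = 0 := (hu u).2 dvd_rfl
    simp only [spanPairSyzygy_apply]
    linear_combination y.1 * huu

lemma exact_spanPairSyzygy_spanPairMap (hu : ∀ y, u * y = 0 ↔ u ∣ y)
    (ht : ∀ y, u ∣ t * y → u ∣ y) :
    Function.Exact (spanPairSyzygy t u) (spanPairMap t u) := fun x ↦ by
  rw [← mul_add_mul_eq_zero_iff_mem_range_spanPairSyzygy hu ht, Subtype.ext_iff]
  simp

lemma exact_spanPairSyzygy (hu : ∀ y, u * y = 0 ↔ u ∣ y)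
    (ht : ∀ y, u ∣ t * y → u ∣ y) :
    Function.Exact (spanPairSyzygy t u) (spanPairSyzygy t u) := fun x ↦ by
  rw [← mul_add_mul_eq_zero_iff_mem_range_spanPairSyzygy hu ht, spanPairSyzygy_apply,
    Prod.mk_eq_zero, and_iff_left_iff_imp, neg_eq_zero, hu]
  exact fun hx ↦ ht _ ⟨-x.1, by linear_combination hx⟩

end SpanPair

section TorSpanPair

universe v

variable {R : Type v} [CommRing R]

/-- `(R ⧸ I)²` as the reduction of `R²` modulo `I`. -/
noncomputable def prodQuotSMulTopEquiv (I : Ideal R) :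
    ((R × R) ⧸ I • (⊤ : Submodule R (R × R))) ≃ₗ[R] (R ⧸ I) × (R ⧸ I) :=
  (TensorProduct.quotTensorEquivQuotSMul (R × R) I).symm ≪≫ₗ
    TensorProduct.prodRight R R (R ⧸ I) R R ≪≫ₗ
    (TensorProduct.rid R (R ⧸ I)).prodCongr (TensorProduct.rid R (R ⧸ I))

/-- If `u R` is the annihilator of `u` and `t` is a nonzerodivisor modulo `u`, then every higher
`Tor(J, J)` of `J = (t, u)` is `(R ⧸ J)²`. -/
noncomputable def torSpanPairEquiv {t u : R} (hu : ∀ y, u * y = 0 ↔ u ∣ y)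
    (ht : ∀ y, u ∣ t * y → u ∣ y) (n : ℕ) :
    ((Tor (ModuleCat R) (n + 1)).obj (ModuleCat.of R (Ideal.span {t, u}))).obj
        (ModuleCat.of R (Ideal.span {t, u})) ≃ₗ[R]
      (R ⧸ Ideal.span {t, u}) × (R ⧸ Ideal.span {t, u}) :=
  torEquivOfPeriodic _ (exact_spanPairSyzygy hu ht) (exact_spanPairSyzygy_spanPairMap hu ht)
    (spanPairMap_surjective t u) (range_spanPairSyzygy_le t u) n ≪≫ₗ
    prodQuotSMulTopEquiv _

end TorSpanPair

lemma bijective_algebraMap_quotient_of_ker_eq {k A : Type*} [CommRing k] [CommRing A] [Algebra k A]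
    {J : Ideal A} (φ : A →ₐ[k] k) (hφ : RingHom.ker φ = J) :
    Function.Bijective (algebraMap k (A ⧸ J)) := by
  subst hφ
  have hsurj : Function.Surjective φ := fun c ↦ ⟨algebraMap k A c, φ.commutes c⟩
  convert (Ideal.quotientKerAlgEquivOfSurjective hsurj).symm.bijective using 1
  exact funext fun c ↦ ((Ideal.quotientKerAlgEquivOfSurjective hsurj).symm.commutes c).symm

section ProdQuotient

variable {R M : Type*} [CommRing R] [AddCommGroup M] [Module R M] {J : Ideal R}

lemma smul_eq_zero_of_equiv_prod_quotient (e : M ≃ₗ[R] (R ⧸ J) × (R ⧸ J)) {x : R} (hx : x ∈ J)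
    (m : M) : x • m = 0 := by
  have hJ (y : R ⧸ J) : x • y = 0 := by
    rw [Algebra.smul_def, Ideal.Quotient.algebraMap_eq, Ideal.Quotient.eq_zero_iff_mem.2 hx,
      zero_mul]
  exact e.injective (by rw [map_smul, map_zero]; exact Prod.ext (hJ _) (hJ _))

lemma exists_basis_of_equiv_prod_quotient {k : Type*} [CommSemiring k] [Algebra k R]
    (hk : Function.Bijective (algebraMap k (R ⧸ J))) (e : M ≃ₗ[R] (R ⧸ J) × (R ⧸ J)) :
    ∃ a b : M, ∀ m, ∃! c : k × k, m = algebraMap k R c.1 • a + algebraMap k R c.2 • b := by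
  refine ⟨e.symm (1, 0), e.symm (0, 1), fun m ↦ ?_⟩
  have hc (c : k × k) : algebraMap k R c.1 • e.symm (1, 0) + algebraMap k R c.2 • e.symm (0, 1) =
      e.symm (Prod.map (algebraMap k (R ⧸ J)) (algebraMap k (R ⧸ J)) c) := by
    rw [← map_smul, ← map_smul, ← map_add]
    congr 1
    ext <;> simp [Algebra.algebraMap_eq_smul_one]
  simpa only [hc, ← LinearEquiv.symm_apply_eq, eq_comm] using! (hk.prodMap hk).existsUnique (e m)

end ProdQuotient

open MvPolynomial in
lemma ker_aeval_zero_eq_idealOfVars {σ k : Type*} [CommSemiring k] :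
    RingHom.ker (aeval (0 : σ → k)) = idealOfVars σ k := by
  ext f
  rw [← pow_one (idealOfVars σ k), mem_pow_idealOfVars_iff']
  simp [aeval_zero, constantCoeff_eq, Finsupp.degree_eq_zero_iff]

open MvPolynomial in
lemma mvPolynomial_X_dvd_of_X_dvd_X_mul {σ k : Type*} [CommSemiring k] {i j : σ} (hij : i ≠ j)
    {f : MvPolynomial σ k} (h : X i ∣ X j * f) : X i ∣ f := by
  classical
  rw [X_dvd_iff_modMonomial_eq_zero] at h ⊢
  ext m
  by_cases hm : Finsupp.single i 1 ≤ m
  · rw [coeff_modMonomial_of_le _ hm, coeff_zero]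
  · have hm' : ¬ Finsupp.single i 1 ≤ Finsupp.single j 1 + m := by
      simpa [hij.symm] using hm
    have := congrArg (coeff (Finsupp.single j 1 + m)) h
    rwa [coeff_modMonomial_of_not_le _ hm', coeff_X_mul, ← coeff_modMonomial_of_not_le _ hm] at this

universe v

/-- The algebra `k[t,u]/(u²)` over an arbitrary commutative ring `k`, with `t` and `u` the classes
of `X 0` and `X 1`. -/
abbrev TruncPoly (k : Type v) [CommRing k] : Type v :=
  MvPolynomial (Fin 2) k ⧸ Ideal.span {(MvPolynomial.X 1 : MvPolynomial (Fin 2) k) ^ 2}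

namespace TruncPoly

open MvPolynomial

variable (k : Type v) [CommRing k]

/-- The polynomial generator of `k[t,u]/(u²)`. -/
noncomputable def t : TruncPoly k := Ideal.Quotient.mk _ (X 0)

/-- The square-zero generator of `k[t,u]/(u²)`. -/
noncomputable def u : TruncPoly k := Ideal.Quotient.mk _ (X 1)

/-- The augmentation ideal `(t, u)` of `k[t,u]/(u²)`. -/
noncomputable def augIdeal : Ideal (TruncPoly k) := Ideal.span {t k, u k}

variable {k}

lemma u_dvd_mk_iff (f : MvPolynomial (Fin 2) k) :
    u k ∣ Ideal.Quotient.mk _ f ↔ X 1 ∣ f := by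
  refine ⟨fun ⟨y, hy⟩ ↦ ?_, map_dvd _⟩
  obtain ⟨g, rfl⟩ := Ideal.Quotient.mk_surjective y
  rw [u, ← map_mul, Ideal.Quotient.mk_eq_mk_iff_sub_mem, Ideal.mem_span_singleton] at hy
  exact (dvd_sub_left (dvd_mul_right _ _)).1 ((dvd_pow_self _ two_ne_zero).trans hy)

lemma u_mul_eq_zero_iff (y : TruncPoly k) : u k * y = 0 ↔ u k ∣ y := by
  obtain ⟨f, rfl⟩ := Ideal.Quotient.mk_surjective y
  rw [u_dvd_mk_iff, u, ← map_mul, Ideal.Quotient.eq_zero_iff_mem, Ideal.mem_span_singleton, sq]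
  exact (isRegular_X.left).dvd_cancel_left

lemma u_dvd_of_u_dvd_t_mul (y : TruncPoly k) (h : u k ∣ t k * y) : u k ∣ y := by
  obtain ⟨f, rfl⟩ := Ideal.Quotient.mk_surjective y
  rw [t, ← map_mul, u_dvd_mk_iff] at h
  exact (u_dvd_mk_iff f).2 (mvPolynomial_X_dvd_of_X_dvd_X_mul one_ne_zero h)

variable (k)

/-- The augmentation of `k[t,u]/(u²)`, sending `t` and `u` to `0`. -/
noncomputable def augmentation : TruncPoly k →ₐ[k] k :=
  Ideal.Quotient.liftₐ _ (aeval 0) fun f hf ↦ by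
    obtain ⟨g, rfl⟩ := Ideal.mem_span_singleton.1 hf
    simp

lemma ker_augmentation : RingHom.ker (augmentation k) = augIdeal k :=
  calc
    RingHom.ker (augmentation k) =
        (RingHom.ker (aeval (0 : Fin 2 → k)).toRingHom).map (Ideal.Quotient.mk _) :=
      Ideal.ker_quotient_lift _ _
    _ = (idealOfVars (Fin 2) k).map (Ideal.Quotient.mk _) :=
      congrArg _ ker_aeval_zero_eq_idealOfVars
    _ = augIdeal k := by
      rw [idealOfVars, Ideal.map_span, ← Set.range_comp]
      simp [augIdeal, t, u, Fin.range_fin_succ, Fin.tail]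

end TruncPoly

open TruncPoly in
theorem statement6_general (k : Type v) [CommRing k] (i : ℕ) (hi : 1 ≤ i) :
    (∀ x ∈ augIdeal k, ∀ m : (((Tor (ModuleCat (TruncPoly k)) i).obj
        (ModuleCat.of (TruncPoly k) (augIdeal k))).obj
          (ModuleCat.of (TruncPoly k) (augIdeal k)) : ModuleCat (TruncPoly k)),
      x • m = 0) ∧
    ∃ a b : (((Tor (ModuleCat (TruncPoly k)) i).obj
        (ModuleCat.of (TruncPoly k) (augIdeal k))).obj
          (ModuleCat.of (TruncPoly k) (augIdeal k)) : ModuleCat (TruncPoly k)),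
      ∀ m, ∃! c : k × k,
        m = algebraMap k (TruncPoly k) c.1 • a + algebraMap k (TruncPoly k) c.2 • b := by
  obtain ⟨n, rfl⟩ := Nat.exists_eq_add_of_le' hi
  let e := torSpanPairEquiv (u_mul_eq_zero_iff (k := k)) u_dvd_of_u_dvd_t_mul n
  exact ⟨fun x hx ↦ smul_eq_zero_of_equiv_prod_quotient e hx,
    exists_basis_of_equiv_prod_quotient
      (bijective_algebraMap_quotient_of_ker_eq (augmentation k) (ker_augmentation k)) e⟩

/-- For an odd prime `p`, `B = 𝔽_p[t,u]/(u²)` and `J = (t,u) ⊆ B`, for every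
`i ≥ 1` the `B`-module `Tor_i^B(J,J)` is annihilated by `J` and is a 2-dimensional
`𝔽_p`-vector space (i.e. it has a basis of two elements over `𝔽_p`, acting through `B`). -/
theorem statement6 (p : ℕ) (hp : p.Prime) (hodd : p ≠ 2) (i : ℕ) (hi : 1 ≤ i) :
    (∀ x ∈ Jid p, ∀ m : (((Tor (ModuleCat (Balg p)) i).obj
        (ModuleCat.of (Balg p) (Jid p))).obj (ModuleCat.of (Balg p) (Jid p)) : ModuleCat (Balg p)),
      x • m = 0) ∧
    ∃ a b : (((Tor (ModuleCat (Balg p)) i).obj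
        (ModuleCat.of (Balg p) (Jid p))).obj (ModuleCat.of (Balg p) (Jid p)) : ModuleCat (Balg p)),
      ∀ m : (((Tor (ModuleCat (Balg p)) i).obj
        (ModuleCat.of (Balg p) (Jid p))).obj (ModuleCat.of (Balg p) (Jid p)) : ModuleCat (Balg p)),
        ∃! c : ZMod p × ZMod p,
          m = algebraMap (ZMod p) (Balg p) c.1 • a + algebraMap (ZMod p) (Balg p) c.2 • b :=
  statement6_general (ZMod p) i hi
end
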